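/- arXiv:1909.08285 — 2 statements merged into one kernel-verified Lean document; each statement's English description precedes it below -/
import Mathlib

section
/- For every odd integer r ≥ 3, the H-graph H(r) admits no packing 6-coloring; equivalently, χ_ρ(H(r)) ≥ 7 for odd r ≥ 3. -/
/-- The `H`-graph `H(r)`: a 3-regular graph on vertices `(row, column)` with rows
`0 = u`, `1 = v`, `2 = w` and columns indexed by `ZMod (2r)`.  Edges: `u_i u_{i+1}`,
`w_i w_{i+1}`, `u_i v_i`, `v_i w_i` (indices mod `2r`), and `v_{2i} v_{2i+1}`. -/
def HGraph (r : ℕ) : SimpleGraph (Fin 3 × ZMod (2 * r)) :=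
  SimpleGraph.fromRel fun x y =>
    ((x.1 = 0 ∧ y.1 = 0 ∨ x.1 = 2 ∧ y.1 = 2) ∧ y.2 = x.2 + 1) ∨
    ((x.1 = 0 ∧ y.1 = 1 ∨ x.1 = 1 ∧ y.1 = 2) ∧ x.2 = y.2) ∨
    (x.1 = 1 ∧ y.1 = 1 ∧ ∃ i : ZMod (2 * r), x.2 = 2 * i ∧ y.2 = 2 * i + 1)

/-- A coloring `c : V → {1,…,k}` is an `S`-packing `k`-coloring for the sequence `s`
if vertices of the same color `i` are at distance greater than `s i`. -/
def IsPackingColoring {V : Type*} (G : SimpleGraph V) (k : ℕ) (s : ℕ → ℕ)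
    (c : V → ℕ) : Prop :=
  (∀ v, 1 ≤ c v ∧ c v ≤ k) ∧
  ∀ u v, u ≠ v → c u = c v → s (c u) < G.dist u v

/-- The `S`-packing chromatic number for the sequence `s`: the least `k` such that
`G` admits an `S`-packing `k`-coloring. -/
noncomputable def packingChromaticNumber {V : Type*} (G : SimpleGraph V)
    (s : ℕ → ℕ) : ℕ :=
  sInf {k | ∃ c : V → ℕ, IsPackingColoring G k s c}

/-! `H(r)` is covered by an infinite ladder-like strip, cut into blocks of two columns joined by an
edge of the middle row. Call a block *upper* if color `3` occurs on its `u`-row, or color `3` is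
missing from both outer rows and color `2` occurs on its `w`-row. A finite search in a window of
fourteen columns shows that every block of a packing `6`-coloring is upper or the mirror image of an
upper one, and that two consecutive blocks are never both upper. By the mirror symmetry `u ↔ w`,
upper and non-upper blocks therefore alternate around `H(r)`, which has `r` blocks, so `r` must be
even. -/

namespace IsPackingColoring

variable {V : Type*} {G : SimpleGraph V} {k l : ℕ} {s : ℕ → ℕ}

theorem mono {c : V → ℕ} (hc : IsPackingColoring G k s c) (hkl : k ≤ l) :
    IsPackingColoring G l s c :=
  ⟨fun v => ⟨(hc.1 v).1, (hc.1 v).2.trans hkl⟩, hc.2⟩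

theorem exists_of_finite [Finite V] (G : SimpleGraph V) (s : ℕ → ℕ) :
    ∃ k c, IsPackingColoring G k s c := by
  obtain ⟨n, ⟨e⟩⟩ := Finite.exists_equiv_fin V
  refine ⟨n, fun v => e v + 1, fun v => ⟨Nat.le_add_left _ _, (e v).isLt⟩, ?_⟩
  exact fun u v huv h => absurd (e.injective (Fin.ext (Nat.succ_injective h))) huv

end IsPackingColoring

theorem lt_packingChromaticNumber {V : Type*} [Finite V] {G : SimpleGraph V} {k : ℕ} {s : ℕ → ℕ}
    (h : ¬ ∃ c, IsPackingColoring G k s c) : k < packingChromaticNumber G s := by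
  refine le_csInf (IsPackingColoring.exists_of_finite G s) fun l ⟨c, hc⟩ => ?_
  by_contra! hlk
  exact h ⟨c, hc.mono (Nat.le_of_lt_succ hlk)⟩

/-! ### Bitset backtracking -/

/-- Whether the bitset `F` forbids color `k` at vertex `a`; the pair is stored at position
`8 * a + k`. It is written with `Nat.beq` rather than `Nat.testBit` because the kernel evaluates it
faster. -/
def forbids (F a k : ℕ) : Bool :=
  (F >>> (8 * a + k) % 2).beq 1

/-- The bitset forbidding exactly the listed pairs of a vertex and a color. -/
def forbidding (l : List (ℕ × ℕ)) : ℕ :=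
  l.foldr (fun p F => 1 <<< (8 * p.1 + p.2) ||| F) 0

/-- The coloring `y` uses no pair forbidden by the bitset `F`. -/
def Avoids (y : ℕ → ℕ) (F : ℕ) : Prop :=
  ∀ a, forbids F a (y a) = false

/-- Conjunction over the six colors, unrolled so that the kernel evaluates it quickly. -/
def allColors (p : ℕ → Bool) : Bool :=
  p 1 && (p 2 && (p 3 && (p 4 && (p 5 && p 6))))

/-- Backtracking search: `refutes cut l F` holds if colors cannot be assigned to the vertices in `l`
so that none is forbidden, where `F` is forbidden at the start and giving color `k` to `a` forbids
`cut a k` in addition. -/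
def refutes (cut : ℕ → ℕ → ℕ) : List ℕ → ℕ → Bool
  | [], _ => false
  | a :: l, F => allColors fun k => forbids F a k || refutes cut l (F ||| cut a k)

theorem forbids_eq_testBit (F a k : ℕ) : forbids F a k = F.testBit (8 * a + k) := by
  rw [Bool.eq_iff_iff, forbids, Nat.beq_eq, ← Nat.decide_shiftRight_mod_two_eq_one,
    decide_eq_true_iff]

theorem allColors_apply {p : ℕ → Bool} (hp : allColors p = true) {k : ℕ} (hk : 1 ≤ k ∧ k ≤ 6) :
    p k = true := by
  obtain ⟨hk₁, hk₆⟩ := hk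
  simp only [allColors, Bool.and_eq_true] at hp
  interval_cases k <;> tauto

namespace Avoids

variable {y : ℕ → ℕ} {F F' : ℕ}

theorem or (hF : Avoids y F) (hF' : Avoids y F') : Avoids y (F ||| F') := fun a => by
  have hFa := hF a
  have hFa' := hF' a
  rw [forbids_eq_testBit] at *
  rw [Nat.testBit_or, hFa, hFa', Bool.or_false]

theorem refutes_eq_false (hy : ∀ a, 1 ≤ y a ∧ y a ≤ 6) {cut : ℕ → ℕ → ℕ}
    (hcut : ∀ a, Avoids y (cut a (y a))) (hF : Avoids y F) (l : List ℕ) :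
    refutes cut l F = false := by
  induction l generalizing F with
  | nil => rfl
  | cons a l ih =>
    rw [← Bool.not_eq_true]
    intro h
    have hbranch := allColors_apply h (hy a)
    rw [hF a, ih (hF.or (hcut a))] at hbranch
    exact Bool.false_ne_true hbranch

end Avoids

theorem avoids_forbidding {y : ℕ → ℕ} (hy : ∀ a, y a < 8) {l : List (ℕ × ℕ)}
    (hl : ∀ p ∈ l, p.2 < 8 ∧ y p.1 ≠ p.2) : Avoids y (forbidding l) := by
  induction l with
  | nil => exact fun a => by simp [forbidding, forbids_eq_testBit]
  | cons p l ih =>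
    obtain ⟨⟨hp, hyp⟩, hl⟩ := List.forall_mem_cons.mp hl
    refine .or (fun a => ?_) (ih hl)
    have hcode : 8 * p.1 + p.2 ≠ 8 * a + y a := fun h => by
      have := hy a
      obtain rfl : p.1 = a := by omega
      omega
    rw [forbids_eq_testBit, Nat.one_shiftLeft, Nat.testBit_two_pow, decide_eq_false hcode]

/-! ### The strip -/

/-- The distance between the vertices numbered `a` and `b` in the infinite strip covering `H(r)`,
where `a` stands for the vertex in row `a % 3` and column `a / 3`. -/
def stripDist (a b : ℕ) : ℕ :=
  Nat.dist (a / 3) (b / 3) +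
    if a % 3 = 1 ∧ b % 3 = 1 ∧ a / 6 ≠ b / 6 then 2 else Nat.dist (a % 3) (b % 3)

/-- Vertices `a` and `b` of the strip may not both have color `k`. Vertices six or more columns
apart are not compared, since they may coincide in `H(3)`. -/
def Clash (a b k : ℕ) : Prop :=
  a ≠ b ∧ Nat.dist (a / 3) (b / 3) < 6 ∧ stripDist a b ≤ k

instance (a b k : ℕ) : Decidable (Clash a b k) :=
  inferInstanceAs (Decidable (_ ∧ _))

/-- A coloring of the strip with colors `1, …, 6` obeying the packing conditions, up to the
restriction made in `Clash`. -/
def IsStripColoring (y : ℕ → ℕ) : Prop :=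
  (∀ a, 1 ≤ y a ∧ y a ≤ 6) ∧ ∀ a b, Clash a b (y a) → y b ≠ y a

/-- The reflection of the strip exchanging the rows `u` and `w`. -/
def mirror (a : ℕ) : ℕ :=
  3 * (a / 3) + (2 - a % 3)

/-- The block of the strip `y` with first vertex `p` is upper: color `3` occurs on its `u`-row, or
it is missing from the `w`-row as well and color `2` occurs on the `w`-row. -/
def IsUpper (y : ℕ → ℕ) (p : ℕ) : Prop :=
  y p = 3 ∨ y (p + 3) = 3 ∨
    (y (p + 2) ≠ 3 ∧ y (p + 5) ≠ 3) ∧ (y (p + 2) = 2 ∨ y (p + 5) = 2)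

theorem mirror_div_three (a : ℕ) : mirror a / 3 = a / 3 := by
  unfold mirror
  omega

theorem mirror_mod_three (a : ℕ) : mirror a % 3 = 2 - a % 3 := by
  unfold mirror
  omega

theorem mirror_injective : Function.Injective mirror := fun a b h => by
  unfold mirror at h
  omega

theorem Clash.map_mirror {a b k : ℕ} (h : Clash a b k) : Clash (mirror a) (mirror b) k := by
  have block (a : ℕ) : mirror a / 6 = a / 6 := by unfold mirror; omega
  simp only [Clash, stripDist, mirror_div_three, mirror_mod_three, block, Nat.dist,
    mirror_injective.ne_iff] at h ⊢
  refine ⟨h.1, h.2.1, ?_⟩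
  split_ifs at h ⊢ <;> omega

theorem Clash.map_add_six {a b k : ℕ} (h : Clash a b k) : Clash (a + 6) (b + 6) k := by
  have column (a : ℕ) : (a + 6) / 3 = a / 3 + 2 := by omega
  have row (a : ℕ) : (a + 6) % 3 = a % 3 := by omega
  have block (a : ℕ) : (a + 6) / 6 = a / 6 + 1 := by omega
  simpa only [Clash, stripDist, column, row, block, Nat.dist_add_add_right, ne_eq,
    Nat.add_right_cancel_iff] using h

/-- The pairs ruled out once vertex `a` has color `k`: the vertices below `48` clashing with `a`
lose color `k`, and `a` itself loses all other colors. -/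
def excluded (a k : ℕ) : ℕ :=
  forbidding (((List.range 48).filter (Clash a · k)).map (·, k) ++
    ((List.range 8).filter (· ≠ k)).map (a, ·))

/-- The bitset forbidding color `k` on the outer rows of the block with first vertex `p`. -/
def forbidOuter (p k : ℕ) : ℕ :=
  forbidding [(p, k), (p + 2, k), (p + 3, k), (p + 5, k)]

/-- The possible reasons for the block with first vertex `p` to be upper, as bitsets of forbidden
pairs. -/
def upperCases (p : ℕ) : List ℕ :=
  [excluded p 3, excluded (p + 3) 3, forbidOuter p 3 ||| excluded (p + 2) 2,
    forbidOuter p 3 ||| excluded (p + 5) 2]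

/-- The vertices in columns `1, …, 14` in the order of the search: columns from the center outwards,
the two outer rows of a column before its middle vertex. -/
def searchOrder : List ℕ :=
  [6, 7, 8, 9, 10, 5, 11, 4, 12, 3, 13, 2, 14, 1].flatMap fun j => [3 * j, 3 * j + 2, 3 * j + 1]

theorem refutes_forbidOuter :
    refutes excluded searchOrder (forbidOuter 18 2 ||| forbidOuter 18 3) = true := by
  decide +kernel

theorem refutes_upperCases : ∀ F ∈ upperCases 18, ∀ F' ∈ upperCases 24,
    refutes excluded searchOrder (F ||| F') = true := by
  decide +kernel

namespace IsStripColoring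

variable {y : ℕ → ℕ}

theorem comp (hy : IsStripColoring y) {φ : ℕ → ℕ}
    (hφ : ∀ {a b k}, Clash a b k → Clash (φ a) (φ b) k) : IsStripColoring (y ∘ φ) :=
  ⟨fun a => hy.1 (φ a), fun _ _ h => hy.2 _ _ (hφ h)⟩

theorem lt_eight (hy : IsStripColoring y) (a : ℕ) : y a < 8 :=
  (hy.1 a).2.trans_lt (by decide)

theorem avoids_excluded (hy : IsStripColoring y) {a k : ℕ} (hk : y a = k) :
    Avoids y (excluded a k) := by
  subst hk
  refine avoids_forbidding hy.lt_eight fun p hp => ?_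
  rcases List.mem_append.mp hp with hp | hp
  · obtain ⟨b, hb, rfl⟩ := List.mem_map.mp hp
    exact ⟨hy.lt_eight a, hy.2 a b (by simpa using (List.mem_filter.mp hb).2)⟩
  · obtain ⟨k, hk, rfl⟩ := List.mem_map.mp hp
    simp only [List.mem_filter, List.mem_range, decide_eq_true_eq] at hk
    exact ⟨hk.1, hk.2.symm⟩

theorem avoids_forbidOuter (hy : IsStripColoring y) {p k : ℕ} (hk : k < 8)
    (h : y p ≠ k ∧ y (p + 2) ≠ k ∧ y (p + 3) ≠ k ∧ y (p + 5) ≠ k) :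
    Avoids y (forbidOuter p k) :=
  avoids_forbidding hy.lt_eight (by simpa [hk] using h)

theorem not_refutes (hy : IsStripColoring y) {F : ℕ} (hF : Avoids y F) (l : List ℕ) :
    refutes excluded l F ≠ true :=
  Bool.eq_false_iff.mp (hF.refutes_eq_false hy.1 (fun _ => hy.avoids_excluded rfl) l)

theorem exists_avoids_upperCases (hy : IsStripColoring y) {p : ℕ} (hp : IsUpper y p) :
    ∃ F ∈ upperCases p, Avoids y F := by
  simp only [upperCases, List.mem_cons, List.not_mem_nil, or_false, exists_eq_or_imp,
    exists_eq_left]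
  by_cases h₀ : y p = 3
  · exact .inl (hy.avoids_excluded h₀)
  by_cases h₃ : y (p + 3) = 3
  · exact .inr (.inl (hy.avoids_excluded h₃))
  obtain ⟨⟨h₂, h₅⟩, htwo⟩ := (hp.resolve_left h₀).resolve_left h₃
  have hthree := hy.avoids_forbidOuter (by decide) ⟨h₀, h₂, h₃, h₅⟩
  exact .inr (.inr (htwo.imp (fun h => hthree.or (hy.avoids_excluded h))
    fun h => hthree.or (hy.avoids_excluded h)))

theorem isUpper_or_isUpper_mirror (hy : IsStripColoring y) :
    IsUpper y 18 ∨ IsUpper (y ∘ mirror) 18 := by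
  by_contra! h
  have hupper : ¬ (y 18 = 3 ∨ y 21 = 3 ∨ (y 20 ≠ 3 ∧ y 23 ≠ 3) ∧ (y 20 = 2 ∨ y 23 = 2)) := h.1
  have hlower : ¬ (y 20 = 3 ∨ y 23 = 3 ∨ (y 18 ≠ 3 ∧ y 21 ≠ 3) ∧ (y 18 = 2 ∨ y 21 = 2)) := h.2
  have htwo := hy.avoids_forbidOuter (p := 18) (k := 2) (by decide) (by tauto)
  have hthree := hy.avoids_forbidOuter (p := 18) (k := 3) (by decide) (by tauto)
  exact hy.not_refutes (htwo.or hthree) _ refutes_forbidOuter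

theorem not_isUpper_and_isUpper (hy : IsStripColoring y) : ¬ (IsUpper y 18 ∧ IsUpper y 24) := by
  rintro ⟨h, h'⟩
  obtain ⟨F, hF, hyF⟩ := hy.exists_avoids_upperCases h
  obtain ⟨F', hF', hyF'⟩ := hy.exists_avoids_upperCases h'
  exact hy.not_refutes (hyF.or hyF') _ (refutes_upperCases F hF F' hF')

theorem isUpper_iff_not_isUpper (hy : IsStripColoring y) : IsUpper y 24 ↔ ¬ IsUpper y 18 := by
  have hnot := hy.not_isUpper_and_isUpper
  have hnot_mirror : ¬ (IsUpper (y ∘ mirror) 18 ∧ IsUpper (y ∘ mirror) 24) :=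
    (hy.comp Clash.map_mirror).not_isUpper_and_isUpper
  have hor := hy.isUpper_or_isUpper_mirror
  have hor_next : IsUpper y 24 ∨ IsUpper (y ∘ mirror) 24 :=
    (hy.comp Clash.map_add_six).isUpper_or_isUpper_mirror
  exact ⟨fun h' h => hnot ⟨h, h'⟩, fun h => hor_next.resolve_right fun h' =>
    hnot_mirror ⟨hor.resolve_left h, h'⟩⟩

end IsStripColoring

/-! ### Distances in `H(r)` -/

namespace HGraph

variable {r : ℕ}

theorem edist_row_le {s : Fin 3} (hs : s ≠ 1) (j : ZMod (2 * r)) (n : ℕ) :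
    (HGraph r).edist (s, j) (s, j + n) ≤ n := by
  induction n with
  | zero => simp
  | succ n ih =>
    have hstep : (HGraph r).edist (s, j + n) (s, j + n + 1) ≤ 1 := by
      rw [SimpleGraph.edist_le_one_iff_adj_or_eq, HGraph, SimpleGraph.fromRel_adj]
      fin_cases s <;> simp_all [em']
    push_cast
    rw [← add_assoc]
    exact SimpleGraph.edist_triangle.trans (add_le_add ih hstep)

theorem edist_column_le (s t : Fin 3) (j : ZMod (2 * r)) :
    (HGraph r).edist (s, j) (t, j) ≤ Nat.dist s t := by
  have huv : (HGraph r).edist (0, j) (1, j) ≤ 1 := by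
    simp [SimpleGraph.edist_le_one_iff_adj_or_eq, HGraph]
  have hvw : (HGraph r).edist (1, j) (2, j) ≤ 1 := by
    simp [SimpleGraph.edist_le_one_iff_adj_or_eq, HGraph]
  have huw : (HGraph r).edist (0, j) (2, j) ≤ 2 :=
    SimpleGraph.edist_triangle.trans ((add_le_add huv hvw).trans_eq one_add_one_eq_two)
  have hvu := SimpleGraph.edist_comm.trans_le huv
  have hwv := SimpleGraph.edist_comm.trans_le hvw
  have hwu := SimpleGraph.edist_comm.trans_le huw
  fin_cases s <;> fin_cases t <;> simp_all [Nat.dist]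

theorem edist_middle_le (i : ZMod (2 * r)) :
    (HGraph r).edist (1, 2 * i) (1, 2 * i + 1) ≤ 1 := by
  rw [SimpleGraph.edist_le_one_iff_adj_or_eq, HGraph, SimpleGraph.fromRel_adj]
  exact (em' _).imp_left fun h => ⟨h, .inl (.inr (.inr ⟨rfl, rfl, i, rfl, rfl⟩))⟩

theorem edist_add_le (s t : Fin 3) (j : ZMod (2 * r)) (n : ℕ) :
    (HGraph r).edist (s, j) (t, j + n) ≤
      (n + if s = 1 ∧ t = 1 then 2 else Nat.dist s t : ℕ) := by
  by_cases hs : s = 1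
  · by_cases ht : t = 1
    · calc (HGraph r).edist (s, j) (t, j + n)
          ≤ (HGraph r).edist (s, j) (0, j) +
              ((HGraph r).edist (0, j) (0, j + n) + (HGraph r).edist (0, j + n) (t, j + n)) :=
            SimpleGraph.edist_triangle.trans (add_le_add_right SimpleGraph.edist_triangle _)
        _ ≤ Nat.dist s 0 + (n + Nat.dist 0 t) :=
            add_le_add (edist_column_le _ _ _)
              (add_le_add (edist_row_le (by decide) _ _) (edist_column_le _ _ _))
        _ = (n + 2 : ℕ) := by
            subst hs ht
            exact_mod_cast show 1 + (n + 1) = n + 2 by ring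
        _ = _ := by rw [if_pos ⟨hs, ht⟩]
    · rw [if_neg (by tauto), Nat.cast_add, add_comm (n : ℕ∞)]
      exact SimpleGraph.edist_triangle.trans
        (add_le_add (edist_column_le s t j) (edist_row_le ht j n))
  · rw [if_neg (by tauto), Nat.cast_add]
    exact SimpleGraph.edist_triangle.trans
      (add_le_add (edist_row_le hs j n) (edist_column_le s t _))

/-- The covering map from the strip onto `H(r)`, sending the block of vertex `0` to block `i`. -/
def cover (i : ZMod (2 * r)) (a : ℕ) : Fin 3 × ZMod (2 * r) :=
  (Fin.ofNat 3 a, 2 * i + (a / 3 : ℕ))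

theorem cover_add_six (i : ZMod (2 * r)) (a : ℕ) : cover i (a + 6) = cover (i + 1) a := by
  have hrow : (a + 6) % 3 = a % 3 := by omega
  have hcolumn : (a + 6) / 3 = a / 3 + 2 := by omega
  simp only [cover, hcolumn, Prod.mk.injEq]
  exact ⟨Fin.ext hrow, by push_cast; ring⟩

theorem cover_natCast_self (a : ℕ) : cover (r : ZMod (2 * r)) a = cover 0 a := by
  have hperiod : (2 * r : ZMod (2 * r)) = 0 := mod_cast ZMod.natCast_self (2 * r)
  simp only [cover, hperiod, mul_zero]

theorem cover_ne_cover (hr : 3 ≤ r) (i : ZMod (2 * r)) {a b : ℕ} (hab : a ≠ b)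
    (hcolumn : Nat.dist (a / 3) (b / 3) < 6) : cover i a ≠ cover i b := by
  intro h
  have hrow : a % 3 = b % 3 := congrArg (fun x => (x.1 : ℕ)) h
  have hmod : a / 3 ≡ b / 3 [MOD 2 * r] :=
    (ZMod.natCast_eq_natCast_iff _ _ _).mp (add_left_cancel (congrArg Prod.snd h))
  have := hmod.eq_of_abs_lt (by rw [Nat.dist] at hcolumn; rw [abs_lt]; omega)
  omega

theorem edist_cover_add_three_le (i : ZMod (2 * r)) {a : ℕ} (ha : a % 6 = 1) :
    (HGraph r).edist (cover i a) (cover i (a + 3)) ≤ 1 := by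
  have hfirst : cover i a = (1, 2 * (i + (a / 6 : ℕ))) := by
    rw [cover, show a / 3 = 2 * (a / 6) by omega]
    exact Prod.ext (Fin.ext (show a % 3 = 1 by omega)) (by push_cast; ring)
  have hsecond : cover i (a + 3) = (1, 2 * (i + (a / 6 : ℕ)) + 1) := by
    rw [cover, show (a + 3) / 3 = 2 * (a / 6) + 1 by omega]
    exact Prod.ext (Fin.ext (show (a + 3) % 3 = 1 by omega)) (by push_cast; ring)
  rw [hfirst, hsecond]
  exact edist_middle_le _

theorem edist_cover_le (i : ZMod (2 * r)) (a b : ℕ) :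
    (HGraph r).edist (cover i a) (cover i b) ≤ stripDist a b := by
  wlog hab : a / 3 ≤ b / 3 generalizing a b
  · rw [SimpleGraph.edist_comm]
    refine (this b a (by omega)).trans_eq ?_
    simp only [stripDist, Nat.dist_comm (b / 3), Nat.dist_comm (b % 3), ne_comm (a := b / 6),
      and_left_comm]
  by_cases hmiddle : a % 6 = 1 ∧ b = a + 3
  · obtain ⟨ha, rfl⟩ := hmiddle
    have hpos : 1 ≤ stripDist a (a + 3) := by simp only [stripDist, Nat.dist]; omega
    exact (edist_cover_add_three_le i ha).trans (mod_cast hpos)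
  obtain rfl | hne := eq_or_ne a b
  · simp
  have hcolumn : cover i b = (Fin.ofNat 3 b, 2 * i + (a / 3 : ℕ) + (b / 3 - a / 3 : ℕ)) := by
    rw [cover, add_assoc, ← Nat.cast_add, Nat.add_sub_cancel' hab]
  have hrow (a : ℕ) : Fin.ofNat 3 a = 1 ↔ a % 3 = 1 := Fin.ext_iff
  rw [hcolumn, cover]
  refine (edist_add_le _ _ _ _).trans (Nat.cast_le.mpr ?_)
  simp only [stripDist, hrow, Fin.val_ofNat, Nat.dist]
  split_ifs <;> omega

theorem isStripColoring_comp_cover (hr : 3 ≤ r) {c : Fin 3 × ZMod (2 * r) → ℕ}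
    (hc : IsPackingColoring (HGraph r) 6 (fun k => k) c) (i : ZMod (2 * r)) :
    IsStripColoring (c ∘ cover i) := by
  refine ⟨fun a => hc.1 _, fun a b ⟨hab, hcolumn, hdist⟩ hcolor => ?_⟩
  have hfar := hc.2 _ _ (cover_ne_cover hr i hab hcolumn) hcolor.symm
  exact (hdist.trans_lt hfar).not_ge (ENat.toNat_le_of_le_natCast (edist_cover_le i a b))

end HGraph

theorem iff_even_of_alternating {P : ℕ → Prop} (h : ∀ n, P (n + 1) ↔ ¬ P n) (n : ℕ) :
    P n ↔ (P 0 ↔ Even n) := by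
  induction n with
  | zero => simp
  | succ n ih =>
    rw [h, ih, Nat.even_add_one]
    tauto

theorem HGraph.not_isPackingColoring_six {r : ℕ} (hr : 3 ≤ r) (hodd : Odd r)
    (c : Fin 3 × ZMod (2 * r) → ℕ) : ¬ IsPackingColoring (HGraph r) 6 (fun k => k) c := by
  intro hc
  have halternate (n : ℕ) :
      IsUpper (c ∘ cover (n + 1 : ℕ)) 18 ↔ ¬ IsUpper (c ∘ cover n) 18 := by
    rw [← (isStripColoring_comp_cover hr hc n).isUpper_iff_not_isUpper]
    simp only [IsUpper, Function.comp_apply, Nat.cast_succ, ← cover_add_six]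
  have hround := iff_even_of_alternating (P := fun n : ℕ => IsUpper (c ∘ cover n) 18) halternate r
  simp only [IsUpper, Function.comp_apply, cover_natCast_self, Nat.cast_zero] at hround
  have := Nat.not_even_iff_odd.mpr hodd
  tauto

/-- For every odd `r ≥ 3`, `H(r)` admits no packing `6`-coloring; equivalently
`χ_ρ(H(r)) ≥ 7`. -/
theorem no_packing_6_coloring_H_graph_odd (r : ℕ) (hr : 3 ≤ r) (hodd : Odd r) :
    (¬ ∃ c : Fin 3 × ZMod (2 * r) → ℕ,
      IsPackingColoring (HGraph r) 6 (fun i => i) c) ∧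
    7 ≤ packingChromaticNumber (HGraph r) (fun i => i) := by
  have hnone : ¬ ∃ c, IsPackingColoring (HGraph r) 6 (fun i => i) c := fun ⟨c, hc⟩ =>
    HGraph.not_isPackingColoring_six hr hodd c hc
  have : NeZero (2 * r) := ⟨by omega⟩
  exact ⟨hnone, lt_packingChromaticNumber hnone⟩
end

section
/- For every integer r ≥ 2, χ_ρ(H(r)) = 5 if r is even and χ_ρ(H(r)) = 7 if r is odd. -/
/-! Every `H(r)` is covered by one infinite strip, in which distances have a closed form, so packing
colorings of `H(r)` can be studied as periodic colorings of the strip.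

Upper bounds: a 5-coloring of the strip of period 4 descends to `H(r)` for even `r`. For odd `r` the
phase is wrong by two columns, which a defect of four columns using two more colors repairs.

Lower bounds: an exhaustive search shows that four colors fail already on four columns. Cut a
6-coloring into blocks of two columns. Each block has one of two types, and an exhaustive search on
twelve columns shows that consecutive blocks have opposite types; this cannot happen around a cycle
of an odd number `r` of blocks. -/

section ColorSearch

/-- The number `M` records the coloring `col` on the vertices in `S`: bit `8 * t + c` says that
vertex `t` has color `c < 8`. Numbers are used as states because the kernel computes with them
natively. -/
def Encodes (col : ℕ → ℕ) (S : Finset ℕ) (M : ℕ) : Prop :=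
  ∀ t c, c < 8 → (M.testBit (8 * t + c) = true ↔ t ∈ S ∧ col t = c)

/-- The encoded assignments of color `c` to the vertices `s < n` that are in conflict with color `c`
at `t`. -/
def conflictMask (R : ℕ → ℕ → ℕ → Bool) (n t c : ℕ) : ℕ :=
  ((List.range n).filter fun s => R s t c).foldr (fun s M => M ||| 2 ^ (8 * s + c)) 0

/-- The bits to be set when vertex `t` receives one of the colors `1, …, k`, each with the bits
that rule it out. -/
def colorMoves (R : ℕ → ℕ → ℕ → Bool) (n k t : ℕ) : List (ℕ × ℕ) :=
  (List.range' 1 k).map fun c => (2 ^ (8 * t + c), conflictMask R n t c)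

/-- Backtracking search: all extensions of the partial coloring `M` to the vertices in the list by
colors `1, …, k` that avoid the conflicts `R` satisfy `goal`. -/
def colorSearch (R : ℕ → ℕ → ℕ → Bool) (n k : ℕ) (goal : ℕ → Bool) : List ℕ → ℕ → Bool
  | [], M => goal M
  | t :: T, M => (colorMoves R n k t).all fun m =>
      !Nat.beq (Nat.land M m.2) 0 || colorSearch R n k goal T (Nat.lor M m.1)

variable {R : ℕ → ℕ → ℕ → Bool} {n k : ℕ} {col : ℕ → ℕ} {S : Finset ℕ} {M t c : ℕ}

theorem encodes_zero (col : ℕ → ℕ) : Encodes col ∅ 0 := by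
  simp [Encodes]

theorem Encodes.insert (hM : Encodes col S M) (ht : col t < 8) :
    Encodes col (insert t S) (M ||| 2 ^ (8 * t + col t)) := by
  intro s c hc
  rw [Nat.testBit_or, Bool.or_eq_true, hM s c hc, Nat.testBit_two_pow, decide_eq_true_iff,
    Finset.mem_insert]
  grind

theorem testBit_foldr_lor_two_pow (f : ℕ → ℕ) (L : List ℕ) (i : ℕ) :
    (L.foldr (fun s M => M ||| 2 ^ f s) 0).testBit i = true ↔ ∃ s ∈ L, f s = i := by
  induction L with
  | nil => simp
  | cons s L ih => simp [Nat.testBit_or, Nat.testBit_two_pow, ih, or_comm]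

theorem Encodes.land_conflictMask (hM : Encodes col S M) (hc : c < 8)
    (hR : ∀ s, R s t c = true → col s ≠ c) : Nat.land M (conflictMask R n t c) = 0 := by
  refine Nat.eq_of_testBit_eq fun i => ?_
  rw [Nat.zero_testBit, ← Bool.not_eq_true]
  intro hi
  obtain ⟨hMi, hmask⟩ := Bool.and_eq_true_iff.1 ((Nat.testBit_and _ _ i).symm.trans hi)
  obtain ⟨s, hs, rfl⟩ := (testBit_foldr_lor_two_pow _ _ _).1 hmask
  exact hR s (List.mem_filter.1 hs).2 ((hM s c hc).1 hMi).2

theorem exists_encodes_of_colorSearch (hk : k < 8) (hcol : ∀ t, 1 ≤ col t ∧ col t ≤ k)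
    (hR : ∀ s t, R s t (col t) = true → col s ≠ col t) {goal : ℕ → Bool} {T : List ℕ}
    (hM : Encodes col S M) (h : colorSearch R n k goal T M = true) :
    ∃ M', goal M' = true ∧ Encodes col (S ∪ T.toFinset) M' := by
  induction T generalizing S M with
  | nil => exact ⟨M, h, by simpa using hM⟩
  | cons t T ih =>
    have ht8 : col t < 8 := (hcol t).2.trans_lt hk
    have hmove : (2 ^ (8 * t + col t), conflictMask R n t (col t)) ∈ colorMoves R n k t :=
      List.mem_map.2 ⟨col t, by grind, rfl⟩
    have hnext := List.all_eq_true.1 h _ hmove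
    rw [hM.land_conflictMask ht8 (hR · t)] at hnext
    obtain ⟨M', hgoal, hM'⟩ := ih (hM.insert ht8) hnext
    exact ⟨M', hgoal, by simpa [Finset.insert_union, Finset.union_insert] using hM'⟩

end ColorSearch

section PackingChromaticNumber

variable {V : Type*} {G : SimpleGraph V} {s : ℕ → ℕ} {k l n : ℕ} {c : V → ℕ}

theorem IsPackingColoring.mono_s16 (hkl : k ≤ l) (hc : IsPackingColoring G k s c) :
    IsPackingColoring G l s c :=
  ⟨fun v => ⟨(hc.1 v).1, (hc.1 v).2.trans hkl⟩, hc.2⟩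

theorem packingChromaticNumber_eq_succ_iff :
    packingChromaticNumber G s = n + 1 ↔
      (∃ c, IsPackingColoring G (n + 1) s c) ∧ ¬∃ c, IsPackingColoring G n s c :=
  Nat.sInf_upward_closed_eq_succ_iff (s := {k | ∃ c, IsPackingColoring G k s c})
    (fun _ _ hkl h => h.imp fun _ hc => hc.mono_s16 hkl) n

end PackingChromaticNumber

namespace HGraph

/-- Distance in the infinite strip covering every `H(r)`, whose columns are indexed by `ℤ`: the
taxicab distance, plus a detour of length 2 between middle vertices of different blocks
`{2m, 2m+1}` of columns. -/
def stripDist (x y : Fin 3 × ℤ) : ℕ :=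
  (x.2 - y.2).natAbs + ((x.1 : ℤ) - y.1).natAbs +
    if x.1 = 1 ∧ y.1 = 1 ∧ x.2 / 2 ≠ y.2 / 2 then 2 else 0

section StripDist

variable {x y z : Fin 3 × ℤ} {n : ℕ}

theorem stripDist_comm (x y : Fin 3 × ℤ) : stripDist x y = stripDist y x := by
  grind [stripDist]

theorem natAbs_sub_le_stripDist (x y : Fin 3 × ℤ) : (x.2 - y.2).natAbs ≤ stripDist x y := by
  grind [stripDist]

theorem stripDist_self (x : Fin 3 × ℤ) : stripDist x x = 0 := by
  simp [stripDist]

theorem eq_of_stripDist_eq_zero (h : stripDist x y = 0) : x = y := by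
  grind [stripDist]

theorem stripDist_triangle (x y z : Fin 3 × ℤ) :
    stripDist x z ≤ stripDist x y + stripDist y z := by
  unfold stripDist
  split_ifs <;> omega

theorem stripDist_add_two_mul (a b : Fin 3) (i j q : ℤ) :
    stripDist (a, i + 2 * q) (b, j + 2 * q) = stripDist (a, i) (b, j) := by
  grind [stripDist]

theorem stripDist_eq_one_iff :
    stripDist x y = 1 ↔
      (x.1 = y.1 ∧ (x.2 - y.2).natAbs = 1 ∧ (x.1 = 1 → x.2 / 2 = y.2 / 2)) ∨
        (x.2 = y.2 ∧ ((x.1 : ℤ) - y.1).natAbs = 1) := by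
  grind [stripDist]

theorem exists_stripDist_eq_one_of_succ (h : stripDist x z = n + 1) :
    ∃ y, stripDist x y = 1 ∧ stripDist y z = n := by
  obtain ⟨a, i⟩ := x
  obtain ⟨b, j⟩ := z
  -- A detour between middle vertices of different blocks goes through the top row.
  by_cases ha : a = 1
  · by_cases hb : b = 1
    · by_cases hblock : i / 2 = j / 2
      · exact ⟨(1, j), by grind [stripDist], by grind [stripDist]⟩
      · subst ha hb
        simp only [stripDist, Fin.val_one] at h
        exact ⟨(0, i), by simp [stripDist], by simp [stripDist]; grind⟩
    · exact ⟨(b, i), by grind [stripDist, Fin.val_one], by grind [stripDist, Fin.val_one]⟩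
  · rcases lt_trichotomy i j with hij | rfl | hij
    · exact ⟨(a, i + 1), by grind [stripDist], by grind [stripDist]⟩
    · exact ⟨(1, i), by grind [stripDist, Fin.val_one], by grind [stripDist, Fin.val_one]⟩
    · exact ⟨(a, i - 1), by grind [stripDist], by grind [stripDist]⟩

end StripDist

/-- The covering map from the strip onto `H(r)`, reducing columns modulo `2r`. -/
def proj (r : ℕ) (x : Fin 3 × ℤ) : Fin 3 × ZMod (2 * r) := (x.1, x.2)

section Cover

variable {r : ℕ} {x y : Fin 3 × ℤ}

theorem proj_eq_proj_iff : proj r x = proj r y ↔ x.1 = y.1 ∧ ((2 * r : ℕ) : ℤ) ∣ y.2 - x.2 := by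
  rw [proj, proj, Prod.mk.injEq, ZMod.intCast_eq_intCast_iff_dvd_sub]

theorem proj_ne_proj_of_stripDist_eq_one (h : stripDist x y = 1) : proj r x ≠ proj r y := by
  rw [Ne, proj_eq_proj_iff]
  rintro ⟨hrow, q, hq⟩
  have := stripDist_eq_one_iff.1 h
  push_cast [mul_assoc] at hq
  omega

theorem even_of_intCast_eq_two_mul {i : ℤ} {m : ZMod (2 * r)} (h : (i : ZMod (2 * r)) = 2 * m) :
    i % 2 = 0 := by
  obtain ⟨m, rfl⟩ := ZMod.intCast_surjective m
  have hdvd : ((2 * r : ℕ) : ℤ) ∣ 2 * m - i := by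
    rw [← ZMod.intCast_eq_intCast_iff_dvd_sub, h, Int.cast_mul, Int.cast_ofNat]
  have := (Dvd.intro (r : ℤ) (by push_cast; rfl) : (2 : ℤ) ∣ (2 * r : ℕ)).trans hdvd
  omega

theorem adj_proj_of_stripDist_eq_one (h : stripDist x y = 1) :
    (HGraph r).Adj (proj r x) (proj r y) := by
  wlog hxy : x.2 < y.2 ∨ x.2 = y.2 ∧ x.1 ≤ y.1 generalizing x y
  · exact (this (stripDist_comm x y ▸ h) (by omega)).symm
  refine (SimpleGraph.fromRel_adj _ _ _).2 ⟨proj_ne_proj_of_stripDist_eq_one h, .inl ?_⟩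
  obtain ⟨a, i⟩ := x
  obtain ⟨b, j⟩ := y
  rcases stripDist_eq_one_iff.1 h with ⟨rfl, hcol, hblock⟩ | ⟨rfl, hrow⟩
  · obtain rfl : j = i + 1 := by omega
    by_cases ha : a = 1
    · have hi : i = 2 * (i / 2) := by grind
      have hcast : (i : ZMod (2 * r)) = 2 * (i / 2 : ℤ) := mod_cast congrArg Int.cast hi
      exact .inr (.inr ⟨ha, ha, (i / 2 : ℤ), hcast, by simp [proj, ← hcast]⟩)
    · exact .inl ⟨by simp only [proj]; grind, by simp [proj]⟩
  · exact .inr (.inl ⟨by simp only [proj]; grind, rfl⟩)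

theorem exists_stripDist_eq_one_of_adj {z : Fin 3 × ZMod (2 * r)}
    (h : (HGraph r).Adj (proj r x) z) : ∃ y, proj r y = z ∧ stripDist x y = 1 := by
  obtain ⟨a, i⟩ := x
  obtain ⟨b, z⟩ := z
  rcases ((SimpleGraph.fromRel_adj _ _ _).1 h).2 with
    (⟨hrow, hz⟩ | ⟨hrow, hz⟩ | ⟨ha, hb, m, hi, hz⟩) |
    (⟨hrow, hz⟩ | ⟨hrow, hz⟩ | ⟨hb, ha, m, hz, hi⟩) <;> simp only [proj] at *
  · exact ⟨(b, i + 1), by simp [hz], stripDist_eq_one_iff.2 (by grind)⟩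
  · exact ⟨(b, i), by simp [hz], stripDist_eq_one_iff.2 (by grind)⟩
  · have := even_of_intCast_eq_two_mul hi
    exact ⟨(b, i + 1), by simp [hz, hi], stripDist_eq_one_iff.2 (by grind)⟩
  · exact ⟨(b, i - 1), by simp [hz], stripDist_eq_one_iff.2 (by grind)⟩
  · exact ⟨(b, i), by simp [hz], stripDist_eq_one_iff.2 (by grind)⟩
  · have := even_of_intCast_eq_two_mul (r := r) (i := i - 1) (m := m) (by simp [hi])
    exact ⟨(b, i - 1), by simp [hz, hi], stripDist_eq_one_iff.2 (by grind)⟩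

theorem exists_walk_proj_length_eq_stripDist (r : ℕ) (x y : Fin 3 × ℤ) :
    ∃ p : (HGraph r).Walk (proj r x) (proj r y), p.length = stripDist x y := by
  induction hn : stripDist x y generalizing x with
  | zero =>
    obtain rfl := eq_of_stripDist_eq_zero hn
    exact ⟨.nil, rfl⟩
  | succ n ih =>
    obtain ⟨x', hxx', hx'y⟩ := exists_stripDist_eq_one_of_succ hn
    obtain ⟨p, hp⟩ := ih x' hx'y
    exact ⟨.cons (adj_proj_of_stripDist_eq_one hxx') p, by simp [hp]⟩

theorem dist_proj_le_stripDist (r : ℕ) (x y : Fin 3 × ℤ) :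
    (HGraph r).dist (proj r x) (proj r y) ≤ stripDist x y :=
  let ⟨p, hp⟩ := exists_walk_proj_length_eq_stripDist r x y
  hp ▸ SimpleGraph.dist_le p

theorem exists_stripDist_le_length {v w : Fin 3 × ZMod (2 * r)} (p : (HGraph r).Walk v w)
    (hx : proj r x = v) : ∃ y, proj r y = w ∧ stripDist x y ≤ p.length := by
  induction p generalizing x with
  | nil => exact ⟨x, hx, (stripDist_self x).le⟩
  | cons hadj p ih =>
    obtain ⟨x', hx', hxx'⟩ := exists_stripDist_eq_one_of_adj (hx ▸ hadj)
    obtain ⟨y, hy, hx'y⟩ := ih hx'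
    refine ⟨y, hy, (stripDist_triangle x x' y).trans ?_⟩
    rw [SimpleGraph.Walk.length_cons]
    omega

theorem exists_stripDist_le_dist (r : ℕ) (x y : Fin 3 × ℤ) :
    ∃ y', proj r y' = proj r y ∧ stripDist x y' ≤ (HGraph r).dist (proj r x) (proj r y) := by
  obtain ⟨p, -⟩ := exists_walk_proj_length_eq_stripDist r x y
  obtain ⟨q, hq⟩ := p.reachable.exists_walk_length_eq_dist
  exact hq ▸ exists_stripDist_le_length q rfl

end Cover

/-- Colorings of the strip in which vertices of the same color `i`, if fewer than `d` columns
apart, are at strip distance greater than `i`. -/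
def IsPackingWithin (d : ℕ) (C : Fin 3 × ℤ → ℕ) : Prop :=
  ∀ x y, x ≠ y → (x.2 - y.2).natAbs < d → C x = C y → C x < stripDist x y

section PackingWithin

variable {r d e k : ℕ} {C : Fin 3 × ℤ → ℕ}

theorem IsPackingWithin.mono_s16 (hde : d ≤ e) (hC : IsPackingWithin e C) : IsPackingWithin d C :=
  fun x y hxy hcol => hC x y hxy (hcol.trans_le hde)

theorem IsPackingWithin.comp_add_two_mul (hC : IsPackingWithin d C) (q : ℤ) :
    IsPackingWithin d fun x => C (x.1, x.2 + 2 * q) := fun x y hxy hcol hcolor => by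
  rw [← stripDist_add_two_mul x.1 y.1 x.2 y.2 q]
  exact hC _ _ (by grind) (by grind) hcolor

theorem isPackingWithin_comp_proj {c : Fin 3 × ZMod (2 * r) → ℕ}
    (hc : IsPackingColoring (HGraph r) k (fun i => i) c) :
    IsPackingWithin (2 * r) (c ∘ proj r) := fun x y hxy hcol hcolor => by
  refine (hc.2 _ _ (fun hproj => hxy ?_) hcolor).trans_le (dist_proj_le_stripDist r x y)
  obtain ⟨hrow, hdvd⟩ := proj_eq_proj_iff.1 hproj
  have := Int.eq_zero_of_dvd_of_natAbs_lt_natAbs hdvd (by omega)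
  exact Prod.ext hrow (by omega)

theorem stripDist_le_stripDist_of_col {a b : Fin 3} {i j j' : ℤ}
    (hcol : (i - j).natAbs ≤ (i - j').natAbs) (hblock : i / 2 = j' / 2 → i / 2 = j / 2) :
    stripDist (a, i) (b, j) ≤ stripDist (a, i) (b, j') := by
  grind [stripDist]

theorem min_stripDist_le_dist (a b : Fin 3) {i j : ℤ} (hij : i ≤ j) (hji : j ≤ i + 2 * r) :
    min (stripDist (a, i) (b, j)) (stripDist (a, i) (b, j - 2 * r)) ≤
      (HGraph r).dist (proj r (a, i)) (proj r (b, j)) := by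
  obtain ⟨⟨b', j'⟩, hproj, hdist⟩ := exists_stripDist_le_dist r (a, i) (b, j)
  refine le_trans ?_ hdist
  obtain ⟨hrow : b' = b, q, hq : j - j' = _⟩ := proj_eq_proj_iff.1 hproj
  subst hrow
  push_cast at hq
  rcases le_or_gt q 0 with hq' | hq'
  · have : 2 * r * q ≤ 0 := mul_nonpos_of_nonneg_of_nonpos (by omega) hq'
    exact min_le_of_left_le (stripDist_le_stripDist_of_col (by omega) (by omega))
  · have : 2 * r ≤ 2 * r * q := le_mul_of_one_le_right (by omega) hq'
    exact min_le_of_right_le (stripDist_le_stripDist_of_col (by omega) (by omega))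

/-- Two vertices in columns `i ≤ j` of `H(r)` are close either in the strip obtained by cutting
`H(r)` before column `0`, or across this seam, where column `j` reappears as `j - 2r`. -/
theorem isPackingColoring_of_seam (hr : r ≠ 0) {m : ℤ} (hm : m ≤ r + 1)
    (hk : ∀ x, 1 ≤ C x ∧ C x ≤ k) (hC : IsPackingWithin (2 * r + 1) C)
    (hseam : ∀ a i, m ≤ i → i < 2 * r → C (a, i - 2 * r) = C (a, i)) :
    IsPackingColoring (HGraph r) k (fun i => i) fun v => C (v.1, v.2.val) := by
  refine ⟨fun v => hk _, fun ⟨a, z⟩ ⟨b, w⟩ hne hcolor => ?_⟩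
  have : NeZero (2 * r) := ⟨by omega⟩
  wlog hij : z.val ≤ w.val generalizing a b z w
  · rw [hcolor, SimpleGraph.dist_comm]
    exact this b w a z hne.symm hcolor.symm (by omega)
  have hw := w.val_lt
  have hcut : C (a, z.val) < stripDist (a, z.val) (b, w.val) := by
    refine hC _ _ (fun h => hne ?_) (by grind) hcolor
    obtain ⟨hab, hzw⟩ := Prod.mk.inj h
    exact Prod.ext hab (ZMod.val_injective _ (mod_cast hzw))
  have hacross : C (a, z.val) < stripDist (a, z.val) (b, w.val - 2 * r) := by
    rcases le_or_gt m w.val with hmj | hmj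
    · refine hC _ _ (fun h => ?_) (by grind) (hcolor.trans (hseam b _ hmj (by omega)).symm)
      have : (z.val : ℤ) = w.val - 2 * r := congrArg Prod.snd h
      omega
    · exact hcut.trans_le (stripDist_le_stripDist_of_col (by omega) (by omega))
  have hproj (c : Fin 3) (z : ZMod (2 * r)) : proj r (c, z.val) = (c, z) := by simp [proj]
  simpa only [hproj] using
    (lt_min hcut hacross).trans_le (min_stripDist_le_dist a b (by omega) (by omega))

end PackingWithin

section Colorings

variable {r d k : ℕ} {C : Fin 3 × ℤ → ℕ}

theorem isPackingWithin_of_le (hk : ∀ x, C x ≤ k) (hC : IsPackingWithin (k + 1) C) :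
    IsPackingWithin d C := fun x y hxy _ hcolor => by
  rcases lt_or_ge (x.2 - y.2).natAbs (k + 1) with hcol | hcol
  · exact hC x y hxy hcol hcolor
  · exact (hk x).trans_lt (hcol.trans (natAbs_sub_le_stripDist x y))

/-- The 5-coloring of the strip that repeats the columns `u = 2131`, `v = 1514`, `w = 3121`. -/
def periodicColoring (x : Fin 3 × ℤ) : ℕ :=
  ![![2, 1, 3, 1], ![1, 5, 1, 4], ![3, 1, 2, 1]] x.1 (Fin.ofNat 4 (x.2 % 4).toNat)

/-- The 7-coloring of the strip obtained from `periodicColoring` by replacing columns `0, …, 3`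
and shifting the pattern by two columns on their right; it has the phase needed to close up
around a cycle of length `2 (mod 4)`. -/
def defectColoring (x : Fin 3 × ℤ) : ℕ :=
  if x.2 < 0 then periodicColoring x
  else if x.2 < 4 then
    ![![2, 1, 5, 2], ![1, 3, 4, 1], ![6, 2, 1, 7]] x.1 (Fin.ofNat 4 x.2.toNat)
  else periodicColoring (x.1, x.2 + 2)

theorem periodicColoring_add_four_mul (a : Fin 3) (i q : ℤ) :
    periodicColoring (a, i + 4 * q) = periodicColoring (a, i) := by
  simp only [periodicColoring, Int.add_mul_emod_self_left]

theorem periodicColoring_mem_Icc (x : Fin 3 × ℤ) : periodicColoring x ∈ Finset.Icc 1 5 := by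
  unfold periodicColoring
  generalize x.1 = a, Fin.ofNat 4 (x.2 % 4).toNat = t
  revert a t
  decide

theorem defectColoring_mem_Icc (x : Fin 3 × ℤ) : defectColoring x ∈ Finset.Icc 1 7 := by
  have hsub : Finset.Icc 1 5 ⊆ Finset.Icc 1 7 := by decide
  unfold defectColoring
  split_ifs
  · exact hsub (periodicColoring_mem_Icc _)
  · generalize x.1 = a, Fin.ofNat 4 x.2.toNat = t
    revert a t
    decide
  · exact hsub (periodicColoring_mem_Icc _)

theorem isPackingWithin_periodicColoring (d : ℕ) : IsPackingWithin d periodicColoring := by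
  have hcheck : ∀ a b : Fin 3, ∀ i ∈ Finset.Ico (0 : ℤ) 4, ∀ j ∈ Finset.Ioo (i - 6) (i + 6),
      (a, i) ≠ (b, j) → periodicColoring (a, i) = periodicColoring (b, j) →
        periodicColoring (a, i) < stripDist (a, i) (b, j) := by
    decide +kernel
  refine isPackingWithin_of_le (fun x => (Finset.mem_Icc.1 (periodicColoring_mem_Icc x)).2)
    fun ⟨a, i⟩ ⟨b, j⟩ hne hcol hcolor => ?_
  obtain ⟨i, q, rfl, hi⟩ : ∃ i' q, i' + 4 * q = i ∧ i' ∈ Finset.Ico (0 : ℤ) 4 :=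
    ⟨i % 4, i / 4, by omega, by rw [Finset.mem_Ico]; omega⟩
  obtain ⟨j, rfl⟩ : ∃ j', j' + 4 * q = j := ⟨j - 4 * q, by omega⟩
  rw [periodicColoring_add_four_mul, periodicColoring_add_four_mul] at hcolor
  rw [periodicColoring_add_four_mul, show 4 * q = 2 * (2 * q) by ring, stripDist_add_two_mul]
  exact hcheck a b i hi j (by rw [Finset.mem_Ioo]; omega) (by grind) hcolor

theorem isPackingWithin_defectColoring (d : ℕ) : IsPackingWithin d defectColoring := by
  have hcheck : ∀ a b : Fin 3, ∀ i ∈ Finset.Icc (-7 : ℤ) 10, ∀ j ∈ Finset.Icc (-7 : ℤ) 10,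
      (a, i) ≠ (b, j) → defectColoring (a, i) = defectColoring (b, j) →
        defectColoring (a, i) < stripDist (a, i) (b, j) := by
    decide +kernel
  refine isPackingWithin_of_le (fun x => (Finset.mem_Icc.1 (defectColoring_mem_Icc x)).2)
    fun ⟨a, i⟩ ⟨b, j⟩ hne hcol hcolor => ?_
  by_cases hmid : i ∈ Finset.Icc (-7 : ℤ) 10 ∧ j ∈ Finset.Icc (-7 : ℤ) 10
  · exact hcheck a b i hmid.1 j hmid.2 hne hcolor
  simp only [Finset.mem_Icc] at hmid
  rcases (by omega : (i < 0 ∧ j < 0) ∨ (4 ≤ i ∧ 4 ≤ j)) with ⟨hi, hj⟩ | ⟨hi, hj⟩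
  · simp only [defectColoring, if_pos hi, if_pos hj] at hcolor ⊢
    exact isPackingWithin_periodicColoring _ _ _ hne hcol hcolor
  · have hi' : ¬i < 0 := by omega
    have hj' : ¬j < 0 := by omega
    simp only [defectColoring, hi.not_gt, hj.not_gt, hi', hj', if_false] at hcolor ⊢
    exact (isPackingWithin_periodicColoring 8).comp_add_two_mul 1 _ _ hne hcol hcolor

theorem exists_isPackingColoring_five (hr : r ≠ 0) (heven : Even r) :
    ∃ c, IsPackingColoring (HGraph r) 5 (fun i => i) c := by
  refine ⟨_, isPackingColoring_of_seam hr (m := 0) (by omega)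
    (fun x => Finset.mem_Icc.1 (periodicColoring_mem_Icc x))
    (isPackingWithin_periodicColoring _) fun a i _ _ => ?_⟩
  obtain ⟨s, rfl⟩ := heven
  rw [← periodicColoring_add_four_mul a (i - _) s]
  exact congrArg _ (Prod.ext rfl (by push_cast; ring))

theorem exists_isPackingColoring_seven (hr : 3 ≤ r) (hodd : Odd r) :
    ∃ c, IsPackingColoring (HGraph r) 7 (fun i => i) c := by
  refine ⟨_, isPackingColoring_of_seam (by omega) (m := 4) (by omega)
    (fun x => Finset.mem_Icc.1 (defectColoring_mem_Icc x))
    (isPackingWithin_defectColoring _) fun a i hi hi' => ?_⟩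
  obtain ⟨s, rfl⟩ := hodd
  rw [defectColoring, defectColoring, if_pos (by simpa using hi'), if_neg (by simp; omega),
    if_neg (by simpa using hi), ← periodicColoring_add_four_mul a (i - _) (s + 1)]
  exact congrArg _ (Prod.ext rfl (by push_cast; ring))

end Colorings

section LowerBound

variable {r d : ℕ} {C : Fin 3 × ℤ → ℕ}

/-- Enumeration of the strip vertices in columns `0, 1, 2, …`, column by column. -/
def cell (t : ℕ) : Fin 3 × ℤ := (Fin.ofNat 3 t, (t / 3 : ℕ))

/-- The conflicts between cells imposed by `IsPackingWithin d`. -/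
def cellConflict (d s t c : ℕ) : Bool :=
  s ≠ t ∧ ((cell s).2 - (cell t).2).natAbs < d ∧ stripDist (cell s) (cell t) ≤ c

theorem cell_injective : Function.Injective cell := fun s t h => by
  have hrow : s % 3 = t % 3 := congrArg (fun x => x.1.val) h
  have hcol : ((s / 3 : ℕ) : ℤ) = (t / 3 : ℕ) := congrArg Prod.snd h
  omega

theorem IsPackingWithin.ne_of_cellConflict (hC : IsPackingWithin d C) (s t : ℕ)
    (h : cellConflict d s t (C (cell t)) = true) : C (cell s) ≠ C (cell t) := fun hcolor => by
  obtain ⟨hst, hcol, hdist⟩ := of_decide_eq_true h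
  have := hC _ _ (cell_injective.ne hst) hcol hcolor
  omega

theorem colorSearch_twelve_four :
    colorSearch (cellConflict 4) 12 4 (fun _ => false) (List.range 12) 0 = true := by
  decide +kernel

theorem IsPackingWithin.not_forall_mem_Icc_four (hC : IsPackingWithin 4 C) :
    ¬∀ x, 1 ≤ C x ∧ C x ≤ 4 := fun hk => by
  obtain ⟨_, hgoal, -⟩ := exists_encodes_of_colorSearch (by norm_num) (fun t => hk (cell t))
    hC.ne_of_cellConflict (encodes_zero _) colorSearch_twelve_four
  exact Bool.false_ne_true hgoal

/-- A type of the block `{2p, 2p+1}` of columns. In colorings with colors `1, …, 6`, consecutive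
blocks turn out to have opposite types; the condition was found by computer search. -/
def TopHeavy (C : Fin 3 × ℤ → ℕ) (p : ℤ) : Prop :=
  C (0, 2 * p) = 3 ∨ C (0, 2 * p + 1) = 3 ∨
    C (2, 2 * p) = 1 ∧ C (2, 2 * p + 1) = 2 ∨ C (2, 2 * p) = 2 ∧ C (2, 2 * p + 1) = 1

/-- `TopHeavy` read off an encoded coloring of the cells. -/
def topHeavyBits (M p : ℕ) : Bool :=
  let color (t c : ℕ) := M.testBit (8 * t + c)
  color (6 * p) 3 || color (6 * p + 3) 3 || color (6 * p + 2) 1 && color (6 * p + 5) 2 ||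
    color (6 * p + 2) 2 && color (6 * p + 5) 1

theorem cell_eq_iff {t : ℕ} {a : Fin 3} {i : ℤ} :
    cell t = (a, i) ↔ t % 3 = a ∧ (t / 3 : ℕ) = i := by
  rw [cell, Prod.mk.injEq, Fin.ext_iff, Fin.val_ofNat]

theorem topHeavyBits_iff {S : Finset ℕ} {M p : ℕ} (hM : Encodes (C ∘ cell) S M)
    (hS : {6 * p, 6 * p + 3, 6 * p + 2, 6 * p + 5} ⊆ S) :
    topHeavyBits M p = true ↔ TopHeavy C p := by
  simp only [Finset.insert_subset_iff, Finset.singleton_subset_iff] at hS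
  obtain ⟨hu, hu', hw, hw'⟩ := hS
  have hbit {t c : ℕ} {x : Fin 3 × ℤ} (ht : t ∈ S) (hc : c < 8) (hx : cell t = x) :
      M.testBit (8 * t + c) = true ↔ C x = c := by
    rw [hM t c hc, ← hx]
    exact and_iff_right ht
  have hcu : cell (6 * p) = ((0, 2 * p) : Fin 3 × ℤ) :=
    cell_eq_iff.2 ⟨by simp only [Fin.val_zero]; omega, by omega⟩
  have hcu' : cell (6 * p + 3) = ((0, 2 * p + 1) : Fin 3 × ℤ) :=
    cell_eq_iff.2 ⟨by simp only [Fin.val_zero]; omega, by omega⟩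
  have hcw : cell (6 * p + 2) = ((2, 2 * p) : Fin 3 × ℤ) :=
    cell_eq_iff.2 ⟨by simp only [Fin.val_two]; omega, by omega⟩
  have hcw' : cell (6 * p + 5) = ((2, 2 * p + 1) : Fin 3 × ℤ) :=
    cell_eq_iff.2 ⟨by simp only [Fin.val_two]; omega, by omega⟩
  simp only [topHeavyBits, TopHeavy, Bool.or_eq_true, Bool.and_eq_true, or_assoc,
    hbit hu (c := 3) (by norm_num) hcu, hbit hu' (c := 3) (by norm_num) hcu',
    hbit hw (c := 1) (by norm_num) hcw, hbit hw (c := 2) (by norm_num) hcw,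
    hbit hw' (c := 1) (by norm_num) hcw', hbit hw' (c := 2) (by norm_num) hcw']

/-- Blocks `2` and `3` are colored first; the colorings giving them the same type are then shown not
to extend to all twelve columns. The columns nearest to the two blocks come first in the inner
search, to keep it small. -/
theorem colorSearch_thirty_six_six :
    colorSearch (cellConflict 6) 36 6
      (fun M => topHeavyBits M 2 != topHeavyBits M 3 ||
        colorSearch (cellConflict 6) 36 6 (fun _ => false)
          [24, 25, 26, 27, 28, 29, 9, 10, 11, 6, 7, 8, 30, 31, 32, 33, 34, 35, 3, 4, 5, 0, 1, 2] M)
      (List.range' 12 12) 0 = true := by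
  decide +kernel

theorem IsPackingWithin.topHeavy_three_iff (hC : IsPackingWithin 6 C)
    (hk : ∀ x, 1 ≤ C x ∧ C x ≤ 6) : TopHeavy C 3 ↔ ¬TopHeavy C 2 := by
  obtain ⟨M, hgoal, hM⟩ := exists_encodes_of_colorSearch (by norm_num) (fun t => hk (cell t))
    hC.ne_of_cellConflict (encodes_zero _) colorSearch_thirty_six_six
  rcases Bool.or_eq_true_iff.1 hgoal with hne | hsearch
  · have h2 := topHeavyBits_iff (p := 2) hM (by decide)
    have h3 := topHeavyBits_iff (p := 3) hM (by decide)
    push_cast at h2 h3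
    grind
  · obtain ⟨_, hfalse, -⟩ := exists_encodes_of_colorSearch (by norm_num) (fun t => hk (cell t))
      hC.ne_of_cellConflict hM hsearch
    exact absurd hfalse Bool.false_ne_true

theorem topHeavy_comp_add_two_mul (C : Fin 3 × ℤ → ℕ) (p q : ℤ) :
    TopHeavy (fun x => C (x.1, x.2 + 2 * q)) p ↔ TopHeavy C (p + q) := by
  simp only [TopHeavy, mul_add, add_right_comm]

theorem IsPackingWithin.topHeavy_succ_iff (hC : IsPackingWithin 6 C)
    (hk : ∀ x, 1 ≤ C x ∧ C x ≤ 6) (p : ℤ) : TopHeavy C (p + 1) ↔ ¬TopHeavy C p := by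
  have := (hC.comp_add_two_mul (p - 2)).topHeavy_three_iff fun x => hk _
  rwa [topHeavy_comp_add_two_mul, topHeavy_comp_add_two_mul, add_sub_cancel,
    show 3 + (p - 2) = p + 1 by ring] at this

theorem IsPackingWithin.topHeavy_add_iff (hC : IsPackingWithin 6 C)
    (hk : ∀ x, 1 ≤ C x ∧ C x ≤ 6) (p : ℤ) (n : ℕ) :
    TopHeavy C (p + n) ↔ (TopHeavy C p ↔ Even n) := by
  induction n with
  | zero => simp
  | succ n ih =>
    rw [Nat.cast_succ, ← add_assoc, hC.topHeavy_succ_iff hk, ih, Nat.even_add_one]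
    exact not_iff.trans (not_iff_comm.trans iff_comm)

theorem topHeavy_comp_proj_add (c : Fin 3 × ZMod (2 * r) → ℕ) (p : ℤ) :
    TopHeavy (c ∘ proj r) (p + r) ↔ TopHeavy (c ∘ proj r) p := by
  have hperiod (a : Fin 3) (i : ℤ) : proj r (a, i + 2 * r) = proj r (a, i) :=
    proj_eq_proj_iff.2 ⟨rfl, -1, by push_cast; ring⟩
  rw [← topHeavy_comp_add_two_mul]
  simp only [TopHeavy, Function.comp_apply, hperiod]

theorem not_exists_isPackingColoring_four (hr : 2 ≤ r) :
    ¬∃ c, IsPackingColoring (HGraph r) 4 (fun i => i) c := fun ⟨_, hc⟩ =>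
  ((isPackingWithin_comp_proj hc).mono_s16 (by omega)).not_forall_mem_Icc_four fun _ => hc.1 _

theorem not_exists_isPackingColoring_six (hr : 3 ≤ r) (hodd : Odd r) :
    ¬∃ c, IsPackingColoring (HGraph r) 6 (fun i => i) c := fun ⟨c, hc⟩ => by
  have hC : IsPackingWithin 6 (c ∘ proj r) := (isPackingWithin_comp_proj hc).mono_s16 (by omega)
  have := (topHeavy_comp_proj_add c 0).symm.trans (hC.topHeavy_add_iff (fun _ => hc.1 _) 0 r)
  rw [← Nat.not_even_iff_odd] at hodd
  tauto

end LowerBound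

end HGraph

/-- For `r ≥ 2`, `χ_ρ(H(r)) = 5` if `r` is even and `χ_ρ(H(r)) = 7` if `r` is odd. -/
theorem packing_chromatic_H_graph (r : ℕ) (hr : 2 ≤ r) :
    packingChromaticNumber (HGraph r) (fun i => i) = if Even r then 5 else 7 := by
  split_ifs with heven
  · exact packingChromaticNumber_eq_succ_iff.2
      ⟨HGraph.exists_isPackingColoring_five (by omega) heven,
        HGraph.not_exists_isPackingColoring_four hr⟩
  · have hodd : Odd r := Nat.not_even_iff_odd.1 heven
    have hr3 : 3 ≤ r := by grind
    exact packingChromaticNumber_eq_succ_iff.2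
      ⟨HGraph.exists_isPackingColoring_seven hr3 hodd,
        HGraph.not_exists_isPackingColoring_six hr3 hodd⟩
end
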